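/- arXiv:1907.04220 — 2 statements merged into one kernel-verified Lean document; each statement's English description precedes it below -/
import Mathlib

section
/- Let μ > 0 and σ > 0, set r = σ/μ, and let ρ_D(r) be the unique solution ρ ∈ [1,∞) of (ρ−1)³/(2ρ−1)² = r². Then the deterministic robust approximation ratio equals ρ_D(r): inf_{p ≥ 0} sup_{F ∈ 𝔽_{μ,σ}} OPT(F)/REV(p;F) = ρ_D(r). Moreover the infimum is attained at the price p* = ρ_D(r)·μ/(2ρ_D(r)−1); that is, OPT(F) ≤ ρ_D(r)·REV(p*;F) for every F ∈ 𝔽_{μ,σ}, while for every price p ≥ 0 and every ρ' < ρ_D(r) there exists F ∈ 𝔽_{μ,σ} with OPT(F) > ρ'·REV(p;F). -/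
open MeasureTheory

/-- Revenue of posting price `p` against valuation distribution `F`:
`REV(p;F) = p · P(X ≥ p)`. -/
noncomputable def rev (F : Measure ℝ) (p : ℝ) : ℝ :=
  p * (F (Set.Ici p)).toReal

/-- Optimal revenue `OPT(F) = sup_{p ≥ 0} p · P(X ≥ p)`. -/
noncomputable def opt (F : Measure ℝ) : ℝ :=
  ⨆ p ∈ Set.Ici (0 : ℝ), rev F p

/-- Revenue of a randomized pricing mechanism `A` (a measure over prices):
`REV(A;F) = E_{p∼A}[REV(p;F)]`. -/
noncomputable def mrev (A F : Measure ℝ) : ℝ :=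
  ∫ p, rev F p ∂A

/-- `F` is a `(μ,σ)`-distributed distribution: a probability measure on `[0,∞)`
with mean `m` and variance at most `s²`. -/
structure MeanVarLe (F : Measure ℝ) (m s : ℝ) : Prop where
  prob : IsProbabilityMeasure F
  supp : F (Set.Iio 0) = 0
  int_mean : Integrable (fun x => x) F
  int_sq : Integrable (fun x => x ^ 2) F
  mean : ∫ x, x ∂F = m
  var_le : ∫ x, (x - m) ^ 2 ∂F ≤ s ^ 2

/-- A randomized pricing mechanism: a probability measure over prices in `[0,∞)`. -/
def IsPriceMech (A : Measure ℝ) : Prop :=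
  IsProbabilityMeasure A ∧ A (Set.Iio 0) = 0

/-!
Upper bound: if `s² ≤ (m - p) (c - m)`, then the quadratic `(x - p) (x - c)` has integral at most
`0` against every `(m, s)`-distributed `F`, so a function lying below
`a · 1{x ≥ p} + b (x - p) (x - c)` with `b ≥ 0` has integral at most `a · P(X ≥ p)`. With
`p = p*` and `c = ρ p*` this shows `REV(q) ≤ ρ · REV(p*)` for `q ≥ c`; it also gives Cantelli's
inequality, hence `p* ≤ ρ · REV(p*)`, which settles the prices below `p*`. For `q ∈ [p*, c]` one has
`REV(q) ≤ c · P(X ≥ p*)` by monotonicity.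

Lower bound: under the two-point law of variance `σ²` with lower atom `x` just below `p`, only the
upper atom buys at the price `p`. As `x → p`, selling to everybody at the price `x` beats `p` by a
factor of at least `ρ` when `p ≥ p*`, and selling at the upper atom does so when `p ≤ p*`.

In the unit `d = μ / (2 ρ - 1)` one has `μ = (2 ρ - 1) d`, `p* = ρ d` and `σ² = (ρ - 1)³ d²`.
-/

section Preliminaries

open Set Filter Topology ProbabilityTheory

lemma exists_mem_Ico_lt_of_continuousWithinAt {α β : Type*} [TopologicalSpace α] [LinearOrder α]
    [OrderTopology α] [DenselyOrdered α] [TopologicalSpace β] [LinearOrder β] [OrderTopology β]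
    {f : α → β} {a p : α} {c : β} (hap : a < p) (hf : ContinuousWithinAt f (Iio p) p)
    (hc : c < f p) : ∃ x ∈ Ico a p, c < f x := by
  have := nhdsLT_neBot_of_exists_lt ⟨a, hap⟩
  have hIco : ∀ᶠ x in 𝓝[<] p, x ∈ Ico a p := Ico_mem_nhdsLT hap
  exact (hIco.and (hf.eventually_const_lt hc)).exists

lemma integral_sub_mul_sub {Ω : Type*} [MeasurableSpace Ω] {P : Measure Ω}
    [IsProbabilityMeasure P] {X : Ω → ℝ} (hX : MemLp X 2 P) (a b : ℝ) :
    ∫ ω, (X ω - a) * (X ω - b) ∂P = Var[X; P] + (P[X] - a) * (P[X] - b) := by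
  have hint : Integrable X P := hX.integrable one_le_two
  have hmean (t : ℝ) : ∫ ω, (X ω - t) ∂P = P[X] - t := by
    simp [integral_sub hint (integrable_const t)]
  have hvar : cov[fun ω => X ω - a, fun ω => X ω - b; P] = Var[X; P] := by
    rw [covariance_sub_const_left hint, covariance_sub_const_right hint,
      covariance_self hX.aemeasurable]
  have hcov := covariance_eq_sub (hX.sub (memLp_const a)) (hX.sub (memLp_const b))
  rw [← hmean a, ← hmean b, ← hvar]
  exact sub_eq_iff_eq_add.1 hcov.symm

lemma iInf_iSup_ofReal_div_ofReal_eq {ι κ : Type*} {N : κ → ℝ} {D : ι → κ → ℝ} {c : ℝ} {i₀ : ι}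
    (hc : 0 ≤ c) (hD : ∀ i j, 0 ≤ D i j) (hle : ∀ j, N j ≤ c * D i₀ j)
    (hlt : ∀ i, ∀ c' < c, ∃ j, c' * D i j < N j) :
    ⨅ i, ⨆ j, ENNReal.ofReal (N j) / ENNReal.ofReal (D i j) = ENNReal.ofReal c := by
  refine le_antisymm (iInf_le_of_le i₀ <| iSup_le fun j => ?_)
    (le_iInf fun i => le_of_forall_lt fun c' hc' => ?_)
  · refine ENNReal.div_le_of_le_mul ?_
    rw [← ENNReal.ofReal_mul hc]
    exact ENNReal.ofReal_le_ofReal (hle j)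
  · obtain ⟨k, hck, hkc⟩ := exists_between hc'
    lift k to NNReal using (hkc.trans ENNReal.ofReal_lt_top).ne
    obtain ⟨j, hj⟩ := hlt i k (by simpa using (ENNReal.lt_ofReal_iff_toReal_lt (by simp)).1 hkc)
    have hN : 0 < N j := (mul_nonneg k.coe_nonneg (hD i j)).trans_lt hj
    refine hck.trans_le (le_iSup_of_le j ?_)
    rw [ENNReal.le_div_iff_mul_le (.inr (ENNReal.ofReal_pos.2 hN).ne') (.inl ENNReal.ofReal_ne_top),
      ← ENNReal.ofReal_coe_nnreal, ← ENNReal.ofReal_mul k.coe_nonneg]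
    exact ENNReal.ofReal_le_ofReal hj.le

end Preliminaries

section Revenue

lemma rev_nonneg (F : Measure ℝ) {p : ℝ} (hp : 0 ≤ p) : 0 ≤ rev F p :=
  mul_nonneg hp ENNReal.toReal_nonneg

lemma rev_zero (F : Measure ℝ) : rev F 0 = 0 :=
  zero_mul _

variable {F : Measure ℝ}

lemma rev_le_self [IsProbabilityMeasure F] {p : ℝ} (hp : 0 ≤ p) : rev F p ≤ p :=
  mul_le_of_le_one_right hp measureReal_le_one

lemma opt_le_of_forall_rev_le {b : ℝ} (h : ∀ q, 0 ≤ q → rev F q ≤ b) : opt F ≤ b := by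
  have hb : 0 ≤ b := rev_zero F ▸ h 0 le_rfl
  exact Real.iSup_le (fun q => Real.iSup_le (h q) hb) hb

lemma rev_le_opt_of_forall_rev_le {b : ℝ} (h : ∀ q, 0 ≤ q → rev F q ≤ b) {q : ℝ} (hq : 0 ≤ q) :
    rev F q ≤ opt F := by
  have hb : 0 ≤ b := rev_zero F ▸ h 0 le_rfl
  have hbdd : BddAbove (Set.range fun p => ⨆ _ : p ∈ Set.Ici (0 : ℝ), rev F p) :=
    ⟨b, by rintro _ ⟨p, rfl⟩; exact Real.iSup_le (h p) hb⟩
  simpa [hq, opt] using le_ciSup hbdd q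

end Revenue

namespace MeanVarLe

open ProbabilityTheory

variable {F : Measure ℝ} {m s p c : ℝ}

lemma memLp_id (hF : MeanVarLe F m s) : MemLp (fun x => x) 2 F :=
  (memLp_two_iff_integrable_sq aestronglyMeasurable_id).2 hF.int_sq

lemma variance_le (hF : MeanVarLe F m s) : Var[fun x => x; F] ≤ s ^ 2 := by
  rw [variance_eq_integral aemeasurable_id', hF.mean]
  exact hF.var_le

lemma rev_le_mean (hF : MeanVarLe F m s) (q : ℝ) : rev F q ≤ m := by
  have := hF.prob
  have hnonneg : 0 ≤ᵐ[F] fun x => x := by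
    rw [Filter.EventuallyLE, ae_iff]
    simpa [Set.Iio] using hF.supp
  exact hF.mean ▸ mul_meas_ge_le_integral_of_nonneg hnonneg hF.int_mean q

lemma rev_le_opt (hF : MeanVarLe F m s) {q : ℝ} (hq : 0 ≤ q) : rev F q ≤ opt F :=
  rev_le_opt_of_forall_rev_le (fun t _ => hF.rev_le_mean t) hq

lemma integral_sub_mul_sub_nonpos (hF : MeanVarLe F m s) (hs : s ^ 2 ≤ (m - p) * (c - m)) :
    ∫ x, (x - p) * (x - c) ∂F ≤ 0 := by
  have := hF.prob
  rw [integral_sub_mul_sub hF.memLp_id, hF.mean]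
  linarith [hF.variance_le]

lemma integral_le_mul_real_Ici (hF : MeanVarLe F m s) (hs : s ^ 2 ≤ (m - p) * (c - m))
    {a b : ℝ} (hb : 0 ≤ b) {g : ℝ → ℝ} (hg : Integrable g F)
    (hle : ∀ x, g x ≤ (Set.Ici p).indicator (fun _ => a) x + b * ((x - p) * (x - c))) :
    ∫ x, g x ∂F ≤ a * F.real (Set.Ici p) := by
  have := hF.prob
  have hind : Integrable ((Set.Ici p).indicator fun _ => a) F :=
    (integrable_const a).indicator measurableSet_Ici
  have hquad : Integrable (fun x => b * ((x - p) * (x - c))) F :=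
    ((hF.memLp_id.sub (memLp_const p)).integrable_mul
      (hF.memLp_id.sub (memLp_const c))).const_mul b
  calc ∫ x, g x ∂F
      ≤ ∫ x, ((Set.Ici p).indicator (fun _ => a) x + b * ((x - p) * (x - c))) ∂F :=
        integral_mono hg (hind.add hquad) hle
    _ = a * F.real (Set.Ici p) + b * ∫ x, (x - p) * (x - c) ∂F := by
        rw [integral_add hind hquad, integral_indicator_const a measurableSet_Ici,
          integral_const_mul, smul_eq_mul, mul_comm a]
    _ ≤ a * F.real (Set.Ici p) :=
        add_le_of_nonpos_right <|
          mul_nonpos_of_nonneg_of_nonpos hb (hF.integral_sub_mul_sub_nonpos hs)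

/-- Cantelli's inequality `(m - p)² / ((m - p)² + s²) ≤ P(X ≥ p)` is the case
`c = m + s² / (m - p)`. -/
lemma sub_le_mul_real_Ici (hF : MeanVarLe F m s) (hpc : p < c)
    (hs : s ^ 2 ≤ (m - p) * (c - m)) : m - p ≤ (c - p) * F.real (Set.Ici p) := by
  have := hF.prob
  have hcp : 0 < c - p := sub_pos.2 hpc
  have hmean : ∫ x, (x - p) ∂F = m - p := by
    simp [integral_sub hF.int_mean (integrable_const p), hF.mean]
  rw [← hmean]
  refine hF.integral_le_mul_real_Ici hs (inv_nonneg.2 hcp.le)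
    (hF.int_mean.sub (integrable_const p)) fun x => ?_
  rw [← div_eq_inv_mul, ← sub_le_iff_le_add', le_div_iff₀ hcp]
  rcases lt_or_ge x p with hxp | hpx
  · simp only [Set.indicator, Set.mem_Ici, hxp.not_ge, if_false]
    nlinarith
  · simp only [Set.indicator, Set.mem_Ici, hpx, if_true]
    nlinarith [sq_nonneg (x - c)]

lemma rev_le_mul_real_Ici (hF : MeanVarLe F m s) (hp : 0 ≤ p) (hpc : p < c)
    (hs : s ^ 2 ≤ (m - p) * (c - m)) {q : ℝ} (hcq : c ≤ q) :
    rev F q ≤ c * F.real (Set.Ici p) := by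
  have := hF.prob
  have hcp : 0 < c - p := sub_pos.2 hpc
  have hrev : rev F q = ∫ x, (Set.Ici q).indicator (fun _ => q) x ∂F := by
    rw [integral_indicator_const q measurableSet_Ici, smul_eq_mul, mul_comm]
    rfl
  rw [hrev]
  refine hF.integral_le_mul_real_Ici hs (inv_nonneg.2 hcp.le)
    ((integrable_const q).indicator measurableSet_Ici) fun x => ?_
  rw [← div_eq_inv_mul, ← sub_le_iff_le_add', le_div_iff₀ hcp]
  rcases lt_or_ge x p with hxp | hpx
  · have hxq : x < q := by linarith
    simp only [Set.indicator, Set.mem_Ici, hxp.not_ge, hxq.not_ge, if_false]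
    nlinarith
  rcases lt_or_ge x q with hxq | hqx
  · simp only [Set.indicator, Set.mem_Ici, hpx, hxq.not_ge, if_true, if_false]
    have hvertex : -((c - p) ^ 2 / 4) ≤ (x - p) * (x - c) := by
      linarith [sq_nonneg (2 * x - p - c)]
    nlinarith
  · simp only [Set.indicator, Set.mem_Ici, hpx, hqx, if_true]
    have hcx : c ≤ x := hcq.trans hqx
    calc (q - c) * (c - p) ≤ (x - c) * (x - p) := by gcongr
      _ = (x - p) * (x - c) := mul_comm _ _

lemma opt_le_mul_rev (hF : MeanVarLe F m s) {k : ℝ} (hp : 0 < p) (hk : 1 < k)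
    (hs : s ^ 2 ≤ (m - p) * (k * p - m)) (hpm : (2 * k - 1) * p ≤ k * m) :
    opt F ≤ k * rev F p := by
  have := hF.prob
  have hpc : p < k * p := lt_mul_left hp hk
  have hrev : k * rev F p = k * p * F.real (Set.Ici p) := (mul_assoc _ _ _).symm
  refine opt_le_of_forall_rev_le fun q hq => ?_
  rcases le_total (k * p) q with hcq | hqc
  · exact hrev ▸ hF.rev_le_mul_real_Ici hp.le hpc hs hcq
  rcases le_total p q with hpq | hqp
  · exact hrev ▸ mul_le_mul hqc (measureReal_mono (Set.Ici_subset_Ici.2 hpq))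
      measureReal_nonneg (hp.trans hpc).le
  · have hcantelli := hF.sub_le_mul_real_Ici hpc hs
    have hp_le : p ≤ k * rev F p := by
      refine le_of_mul_le_mul_left ?_ (sub_pos.2 hk)
      calc (k - 1) * p ≤ k * (m - p) := by linarith
        _ ≤ k * ((k * p - p) * F.real (Set.Ici p)) := by gcongr
        _ = (k - 1) * (k * rev F p) := by rw [hrev]; ring
    exact (rev_le_self hq).trans (hqp.trans hp_le)

end MeanVarLe

section PointMasses

open ProbabilityTheory

lemma meanVarLe_dirac {m : ℝ} (hm : 0 ≤ m) (s : ℝ) : MeanVarLe (Measure.dirac m) m s where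
  prob := inferInstance
  supp := by simpa using hm
  int_mean := integrable_dirac (by simp)
  int_sq := integrable_dirac (by simp)
  mean := by simp
  var_le := by simp [sq_nonneg]

lemma rev_dirac (m p : ℝ) : rev (Measure.dirac m) p = if p ≤ m then p else 0 := by
  by_cases h : p ≤ m <;> simp [rev, h]

lemma meanVarLe_bernoulliMeasure {h x m s : ℝ} (hh : 0 ≤ h) (hx : 0 ≤ x) (w : unitInterval)
    (hm : w * h + (1 - w) * x = m) (hs : w * (h - m) ^ 2 + (1 - w) * (x - m) ^ 2 ≤ s ^ 2) :
    MeanVarLe (bernoulliMeasure h x w) m s where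
  prob := inferInstance
  supp := bernoulliMeasure_apply_of_notMem_of_notMem w measurableSet_Iio (by simpa using hh)
    (by simpa using hx)
  int_mean := integrable_bernoulliMeasure _ _ _ _
  int_sq := integrable_bernoulliMeasure _ _ _ _
  mean := by simpa only [integral_bernoulliMeasure, smul_eq_mul] using hm
  var_le := by simpa only [integral_bernoulliMeasure, smul_eq_mul] using hs

lemma rev_bernoulliMeasure_of_le {h x q : ℝ} (w : unitInterval) (hh : q ≤ h) (hx : q ≤ x) :
    rev (bernoulliMeasure h x w) q = q := by
  simp [rev, hh, hx]

lemma rev_bernoulliMeasure_of_lt {h x q : ℝ} (w : unitInterval) (hh : q ≤ h) (hx : x < q) :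
    rev (bernoulliMeasure h x w) q = q * w :=
  congrArg (q * ·) <| bernoulliMeasure_real_apply_of_mem_of_notMem w measurableSet_Ici hh
    (by simpa using hx)

/-- The witness is the two-point law with lower atom `x` that attains Cantelli's inequality. -/
lemma exists_meanVarLe_rev_eq {m s x : ℝ} (hx : 0 ≤ x) (hxm : x < m) :
    ∃ F, MeanVarLe F m s ∧ rev F x = x ∧ ∀ q, x < q → q ≤ m + s ^ 2 / (m - x) →
      rev F q = q * ((m - x) ^ 2 / ((m - x) ^ 2 + s ^ 2)) := by
  have hu : 0 < m - x := sub_pos.2 hxm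
  have hvar : 0 ≤ s ^ 2 / (m - x) := by positivity
  let w : unitInterval := ⟨(m - x) ^ 2 / ((m - x) ^ 2 + s ^ 2),
    by positivity, div_le_one_of_le₀ (by linarith [sq_nonneg s]) (by positivity)⟩
  refine ⟨bernoulliMeasure (m + s ^ 2 / (m - x)) x w,
    meanVarLe_bernoulliMeasure (by linarith) hx w ?_ (le_of_eq ?_),
    rev_bernoulliMeasure_of_le w (by linarith) le_rfl,
    fun q hxq hqh => rev_bernoulliMeasure_of_lt w hqh hxq⟩
  · simp only [w]
    field_simp
    ring
  · simp only [w]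
    field_simp
    ring

end PointMasses

section LowerBound

variable {m s p k : ℝ}

lemma exists_mul_rev_lt_opt_of_rev_dirac_eq_zero (hm : 0 < m)
    (hrev : rev (Measure.dirac m) p = 0) (k : ℝ) :
    ∃ F, MeanVarLe F m s ∧ k * rev F p < opt F := by
  have hF : MeanVarLe (Measure.dirac m) m s := meanVarLe_dirac hm.le s
  refine ⟨_, hF, ?_⟩
  calc k * rev (Measure.dirac m) p = 0 := by rw [hrev, mul_zero]
    _ < m := hm
    _ = rev (Measure.dirac m) m := by simp [rev_dirac]
    _ ≤ opt (Measure.dirac m) := hF.rev_le_opt hm.le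

lemma exists_mul_rev_lt_opt_of_lower_atom (hp : 0 < p) (hpm : p ≤ m)
    (hk : k * (m - p) ^ 2 < (m - p) ^ 2 + s ^ 2) :
    ∃ F, MeanVarLe F m s ∧ k * rev F p < opt F := by
  obtain ⟨x, ⟨hx, hxp⟩, hkx⟩ := exists_mem_Ico_lt_of_continuousWithinAt (c := 0)
    (f := fun x => x * ((m - x) ^ 2 + s ^ 2) - k * (p * (m - x) ^ 2)) hp
    (by fun_prop) (by linarith [mul_pos hp (sub_pos.2 hk)])
  have hu : 0 < m - x := by linarith
  obtain ⟨F, hF, hrevx, hrev⟩ := exists_meanVarLe_rev_eq (s := s) hx (hxp.trans_le hpm)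
  refine ⟨F, hF, ?_⟩
  calc k * rev F p = k * (p * (m - x) ^ 2) / ((m - x) ^ 2 + s ^ 2) := by
        rw [hrev p hxp (hpm.trans (le_add_of_nonneg_right (by positivity)))]
        ring
    _ < x := by rw [div_lt_iff₀ (by positivity)]; linarith
    _ = rev F x := hrevx.symm
    _ ≤ opt F := hF.rev_le_opt hx

lemma exists_mul_rev_lt_opt_of_upper_atom (hp : 0 < p) (hpm : p ≤ m)
    (hk : k * (p * (m - p)) < m * (m - p) + s ^ 2) :
    ∃ F, MeanVarLe F m s ∧ k * rev F p < opt F := by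
  obtain ⟨x, ⟨hx, hxp⟩, hkx⟩ := exists_mem_Ico_lt_of_continuousWithinAt (c := 0)
    (f := fun x => m * (m - x) + s ^ 2 - k * (p * (m - x))) hp (by fun_prop) (by linarith)
  have hu : 0 < m - x := by linarith
  have hmh : m ≤ m + s ^ 2 / (m - x) := le_add_of_nonneg_right (by positivity)
  have hkp : k * p < m + s ^ 2 / (m - x) := by
    rw [← sub_lt_iff_lt_add', lt_div_iff₀ hu]
    linarith
  obtain ⟨F, hF, -, hrev⟩ := exists_meanVarLe_rev_eq (s := s) hx (hxp.trans_le hpm)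
  refine ⟨F, hF, ?_⟩
  calc k * rev F p = k * p * ((m - x) ^ 2 / ((m - x) ^ 2 + s ^ 2)) := by
        rw [hrev p hxp (hpm.trans hmh), mul_assoc]
    _ < (m + s ^ 2 / (m - x)) * ((m - x) ^ 2 / ((m - x) ^ 2 + s ^ 2)) := by gcongr
    _ = rev F (m + s ^ 2 / (m - x)) := (hrev _ (by linarith) le_rfl).symm
    _ ≤ opt F := hF.rev_le_opt (by linarith)

end LowerBound

section Scale

variable {s d k : ℝ}

lemma one_lt_of_cube_div_sq_eq {r : ℝ} (hr : r ≠ 0) (hk : 1 ≤ k)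
    (h : (k - 1) ^ 3 / (2 * k - 1) ^ 2 = r ^ 2) : 1 < k := by
  refine hk.lt_of_ne ?_
  rintro rfl
  exact hr (by simpa using h.symm)

lemma exists_scale_of_cube_div_sq_eq {m : ℝ} (hm : 0 < m) (hk : 1 < k)
    (h : (k - 1) ^ 3 / (2 * k - 1) ^ 2 = (s / m) ^ 2) :
    ∃ d, 0 < d ∧ m = (2 * k - 1) * d ∧ s ^ 2 = (k - 1) ^ 3 * d ^ 2 := by
  have hden : 0 < 2 * k - 1 := by linarith
  refine ⟨m / (2 * k - 1), by positivity, (mul_div_cancel₀ m hden.ne').symm, ?_⟩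
  calc s ^ 2 = (s / m) ^ 2 * m ^ 2 := by field_simp
    _ = (k - 1) ^ 3 * (m / (2 * k - 1)) ^ 2 := by
      rw [← h, div_pow, div_mul_eq_mul_div, mul_div_assoc]

lemma MeanVarLe.opt_le_mul_rev_of_scale {F : Measure ℝ} (hF : MeanVarLe F ((2 * k - 1) * d) s)
    (hd : 0 < d) (hk : 1 < k) (hs : s ^ 2 ≤ (k - 1) ^ 3 * d ^ 2) :
    opt F ≤ k * rev F (k * d) :=
  hF.opt_le_mul_rev (by positivity) hk (hs.trans_eq (by ring)) (le_of_eq (by ring))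

lemma exists_mul_rev_lt_opt_of_scale {p k' : ℝ} (hd : 0 < d) (hk : 1 < k)
    (hs : (k - 1) ^ 3 * d ^ 2 ≤ s ^ 2) (hp : 0 ≤ p) (hk' : k' < k) :
    ∃ F, MeanVarLe F ((2 * k - 1) * d) s ∧ k' * rev F p < opt F := by
  have hk0 : 0 < k - 1 := sub_pos.2 hk
  have hgap : 0 < (k - 1) * d := mul_pos hk0 hd
  have hm : 0 < (2 * k - 1) * d := mul_pos (by linarith) hd
  rcases hp.eq_or_lt with rfl | hp
  · exact exists_mul_rev_lt_opt_of_rev_dirac_eq_zero hm (rev_zero _) k'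
  rcases lt_or_ge ((2 * k - 1) * d) p with hmp | hpm
  · exact exists_mul_rev_lt_opt_of_rev_dirac_eq_zero hm (by simp [rev_dirac, hmp]) k'
  rcases le_total (k * d) p with hdp | hpd
  · refine exists_mul_rev_lt_opt_of_lower_atom hp hpm ?_
    set u := (2 * k - 1) * d - p
    have hu_le : (k - 1) * u ^ 2 ≤ s ^ 2 :=
      calc (k - 1) * u ^ 2 ≤ (k - 1) * ((k - 1) * d) ^ 2 := by gcongr; linarith
        _ = (k - 1) ^ 3 * d ^ 2 := by ring
        _ ≤ s ^ 2 := hs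
    have hs0 : 0 < s ^ 2 := lt_of_lt_of_le (by positivity) hs
    rcases (sq_nonneg u).eq_or_lt with hu0 | hu0
    · simpa [← hu0] using hs0
    · linarith [mul_lt_mul_of_pos_right hk' hu0]
  · refine exists_mul_rev_lt_opt_of_upper_atom hp hpm ?_
    set u := (2 * k - 1) * d - p with hu
    have hu0 : 0 < u := by linarith
    have hkp : k * p ≤ k * (k * d) := by gcongr
    have hfactor : 0 ≤ (k * d - p) * ((k ^ 2 + k - 1) * d - k * p) :=
      mul_nonneg (sub_nonneg.2 hpd) (by linarith)
    calc k' * (p * u) < k * (p * u) := by gcongr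
      _ ≤ (2 * k - 1) * d * u + (k - 1) ^ 3 * d ^ 2 := by rw [hu]; linarith
      _ ≤ (2 * k - 1) * d * u + s ^ 2 := by gcongr

end Scale

/-- For `μ, σ > 0`, `r = σ/μ`, and `ρ` the unique solution in `[1,∞)` of
`(ρ−1)³/(2ρ−1)² = r²`, the deterministic robust approximation ratio equals `ρ`:
`inf_{p ≥ 0} sup_{F ∈ 𝔽_{μ,σ}} OPT(F)/REV(p;F) = ρ` (ratios taken in `ℝ≥0∞`, so `c/0 = ∞`
for `c > 0`); the infimum is attained at `p* = ρμ/(2ρ−1)`, i.e. `OPT(F) ≤ ρ·REV(p*;F)` for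
all `F ∈ 𝔽_{μ,σ}`, while for any price `p ≥ 0` and any `ρ' < ρ` some `F ∈ 𝔽_{μ,σ}` has
`OPT(F) > ρ'·REV(p;F)`. -/
theorem stmt0 (μ σ : ℝ) (hμ : 0 < μ) (hσ : 0 < σ) (r : ℝ) (hr : r = σ / μ)
    (ρ : ℝ) (hρ1 : 1 ≤ ρ) (hρ2 : (ρ - 1) ^ 3 / (2 * ρ - 1) ^ 2 = r ^ 2) :
    (⨅ p : {p : ℝ // 0 ≤ p}, ⨆ F : {F : Measure ℝ // MeanVarLe F μ σ},
        ENNReal.ofReal (opt F.1) / ENNReal.ofReal (rev F.1 p.1)) = ENNReal.ofReal ρ ∧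
    (∀ F : Measure ℝ, MeanVarLe F μ σ → opt F ≤ ρ * rev F (ρ * μ / (2 * ρ - 1))) ∧
    (∀ p : ℝ, 0 ≤ p → ∀ ρ' : ℝ, ρ' < ρ →
      ∃ F : Measure ℝ, MeanVarLe F μ σ ∧ ρ' * rev F p < opt F) := by
  subst hr
  have hρ : 1 < ρ := one_lt_of_cube_div_sq_eq (div_pos hσ hμ).ne' hρ1 hρ2
  obtain ⟨d, hd, rfl, hσd⟩ := exists_scale_of_cube_div_sq_eq hμ hρ hρ2
  have hprice : ρ * ((2 * ρ - 1) * d) / (2 * ρ - 1) = ρ * d := by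
    rw [mul_left_comm, mul_div_cancel_left₀ _ (by linarith)]
  have hupper : ∀ F, MeanVarLe F ((2 * ρ - 1) * d) σ → opt F ≤ ρ * rev F (ρ * d) :=
    fun _ hF => hF.opt_le_mul_rev_of_scale hd hρ hσd.le
  have hlower : ∀ p, 0 ≤ p → ∀ ρ' < ρ,
      ∃ F, MeanVarLe F ((2 * ρ - 1) * d) σ ∧ ρ' * rev F p < opt F :=
    fun _ hp _ hρ' => exists_mul_rev_lt_opt_of_scale hd hρ hσd.ge hp hρ'
  refine ⟨?_, by rwa [hprice], hlower⟩
  refine iInf_iSup_ofReal_div_ofReal_eq (i₀ := ⟨ρ * d, by positivity⟩) (by positivity)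
    (fun p F => rev_nonneg F.1 p.2) (fun F => hupper F.1 F.2) fun p ρ' hρ' => ?_
  obtain ⟨F, hF, hlt⟩ := hlower p.1 p.2 ρ' hρ'
  exact ⟨⟨F, hF⟩, hlt⟩
end

section
/- Let F = F_1 × ⋯ × F_m be a product Borel probability distribution on [0,∞)^m where F_j has mean μ_j > 0 and variance at most σ_j². Set μ̄ = Σ_j μ_j, σ̄ = (Σ_j σ_j²)^{1/2}, r̄ = σ̄/μ̄, r_j = σ_j/μ_j and r_max = max_j r_j. Let F_Y be the distribution of the sum Y = v_1 + ⋯ + v_m of independent v_j ∼ F_j. Then selling the full bundle via the log-lottery P^log_{μ̄,σ̄} guarantees REV(P^log_{μ̄,σ̄};F_Y) ≥ OPT_m(F)/ρ(r̄), and moreover ρ(r̄) ≤ ρ(r_max). -/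
open MeasureTheory

/-- The log-lottery `P^log` with parameters `p1 ≤ p2`: the probability measure supported on
`[p1,p2]` whose cdf on `[p1,p2)` is
`x ↦ (p2·ln(x/p1) − (x−p1)) / (p2·ln(p2/p1) − (p2−p1))`
(for `p1 = p2` this is the point mass at `p1`). -/
structure IsLogLottery (A : Measure ℝ) (p1 p2 : ℝ) : Prop where
  prob : IsProbabilityMeasure A
  supp : A (Set.Icc p1 p2) = 1
  cdf : ∀ x ∈ Set.Ico p1 p2,
    A (Set.Iic x) = ENNReal.ofReal
      ((p2 * Real.log (x / p1) - (x - p1)) / (p2 * Real.log (p2 / p1) - (p2 - p1)))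

/-- A (direct revelation, possibly randomized) truthful selling mechanism for `m` items and
a single additive buyer: an allocation rule `alloc : [0,∞)^m → [0,1]^m` and a payment rule
`pay : [0,∞)^m → [0,∞)` satisfying incentive compatibility and individual rationality. -/
structure TruthfulMech (m : ℕ) where
  alloc : (Fin m → ℝ) → Fin m → ℝ
  pay : (Fin m → ℝ) → ℝ
  alloc_meas : Measurable alloc
  pay_meas : Measurable pay
  alloc_nonneg : ∀ v i, 0 ≤ alloc v i
  alloc_le_one : ∀ v i, alloc v i ≤ 1
  pay_nonneg : ∀ v, 0 ≤ pay v
  ic : ∀ v w : Fin m → ℝ, (∀ i, 0 ≤ v i) → (∀ i, 0 ≤ w i) →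
    (∑ i, alloc w i * v i) - pay w ≤ (∑ i, alloc v i * v i) - pay v
  ir : ∀ v : Fin m → ℝ, (∀ i, 0 ≤ v i) → 0 ≤ (∑ i, alloc v i * v i) - pay v

/-- Expected revenue of a truthful `m`-item mechanism on the joint distribution `F`. -/
noncomputable def mrevM {m : ℕ} (M : TruthfulMech m) (F : Measure (Fin m → ℝ)) : ℝ :=
  ∫ v, M.pay v ∂F

/-- Optimal revenue `OPT_m(F)`: the supremum of expected revenue over all truthful
mechanisms for `m` items. -/
noncomputable def optM (m : ℕ) (F : Measure (Fin m → ℝ)) : ℝ :=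
  ⨆ M : TruthfulMech m, mrevM M F

open ProbabilityTheory Set

/-!
A buyer of value `y` accepts every price `p ≤ y`, so by Fubini a randomized price `A` earns
`E_Y[∫_{p ≤ Y} p dA(p)]`. The log-lottery has density proportional to `p2 / p - 1`, which makes the
inner integral proportional to `∫_{p1}^{min(p2, y)} (p2 - p) dp`; this dominates a concave
quadratic in `y` with which it agrees on `[p1, p2]`. The expectation of that quadratic depends only
on the first two moments of `Y`, and the equations for `p1`, `p2` make it at least `p1`. So the
log-lottery earns `p1` on every `(μ, σ)`-distribution, and the equation for `ρ` says
`ρ = 1 + log (p2 / p1) = μ / p1`.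

For a bundle, individual rationality bounds the optimal revenue by the expected total value. The
total value has standard deviation at most the Euclidean norm of the `σ_j`, because its variance is
the sum of all covariances and the off-diagonal ones are nonpositive.
-/

section MeanVar

variable {Ω ι : Type*} [MeasurableSpace Ω] {P : Measure Ω} {F : Measure ℝ} {a s : ℝ}

theorem meanVarLe_iff [IsProbabilityMeasure F] :
    MeanVarLe F a s ↔
      (∀ᵐ x ∂F, 0 ≤ x) ∧ MemLp id 2 F ∧ ∫ x, x ∂F = a ∧ Var[id; F] ≤ s ^ 2 := by
  have hnonneg : F (Iio 0) = 0 ↔ ∀ᵐ x ∂F, 0 ≤ x := by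
    simp only [ae_iff, not_le, Iio_def]
  have hvar (hmean : ∫ x, x ∂F = a) : Var[id; F] = ∫ x, (x - a) ^ 2 ∂F := by
    simp only [variance_eq_integral aemeasurable_id, id, hmean]
  have hsq : MemLp id 2 F ↔ Integrable (fun x => x ^ 2) F :=
    memLp_two_iff_integrable_sq aestronglyMeasurable_id
  constructor
  · intro h
    exact ⟨hnonneg.1 h.supp, hsq.2 h.int_sq, h.mean, (hvar h.mean).trans_le h.var_le⟩
  · rintro ⟨h0, hL2, hmean, hle⟩
    exact ⟨inferInstance, hnonneg.2 h0, hL2.integrable one_le_two, hsq.1 hL2, hmean,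
      (hvar hmean).symm.trans_le hle⟩

theorem meanVarLe_map_iff [IsProbabilityMeasure P] {X : Ω → ℝ} (hX : AEMeasurable X P) :
    MeanVarLe (P.map X) a s ↔
      (∀ᵐ ω ∂P, 0 ≤ X ω) ∧ MemLp X 2 P ∧ ∫ ω, X ω ∂P = a ∧ Var[X; P] ≤ s ^ 2 := by
  have := Measure.isProbabilityMeasure_map hX
  rw [meanVarLe_iff, ae_map_iff hX measurableSet_Ici,
    memLp_map_measure_iff aestronglyMeasurable_id hX, Function.id_comp,
    variance_id_map hX, integral_map hX (by fun_prop)]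

theorem MeanVarLe.integral_sq_le (h : MeanVarLe F a s) : ∫ x, x ^ 2 ∂F ≤ a ^ 2 + s ^ 2 := by
  have := h.prob
  obtain ⟨-, hL2, hmean, hvar⟩ := meanVarLe_iff.1 h
  have hsub := variance_eq_sub hL2
  simp only [Pi.pow_apply, id, hmean] at hsub
  linarith

theorem MeanVarLe.ae_eq_mean (h : MeanVarLe F a 0) : ∀ᵐ x ∂F, x = a := by
  have := h.prob
  obtain ⟨-, hL2, hmean, hvar⟩ := meanVarLe_iff.1 h
  have hzero : Var[id; F] = 0 := le_antisymm (by simpa using hvar) (variance_nonneg _ _)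
  filter_upwards [ae_eq_integral_of_variance_eq_zero hL2 hzero] with x hx
  exact hx.trans hmean

theorem variance_fun_sum_le_of_covariance_nonpos [Fintype ι] [IsFiniteMeasure P] {X : ι → Ω → ℝ}
    (hX : ∀ i, MemLp (X i) 2 P) (hcov : Pairwise fun i j => cov[X i, X j; P] ≤ 0) :
    Var[fun ω => ∑ i, X i ω; P] ≤ ∑ i, Var[X i; P] := by
  classical
  rw [variance_fun_sum hX]
  refine Finset.sum_le_sum fun i _ => ?_
  rw [← Finset.add_sum_erase _ _ (Finset.mem_univ i), covariance_self (hX i).aemeasurable]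
  exact add_le_of_nonpos_right <|
    Finset.sum_nonpos fun j hj => hcov (Finset.ne_of_mem_erase hj).symm

theorem MeanVarLe.map_sum [Fintype ι] [IsProbabilityMeasure P] {X : ι → Ω → ℝ} {a s : ι → ℝ}
    (hX : ∀ i, AEMeasurable (X i) P) (h : ∀ i, MeanVarLe (P.map (X i)) (a i) (s i))
    (hcov : Pairwise fun i j => cov[X i, X j; P] ≤ 0) :
    MeanVarLe (P.map fun ω => ∑ i, X i ω) (∑ i, a i) (√(∑ i, s i ^ 2)) := by
  choose hnonneg hL2 hmean hvar using fun i => (meanVarLe_map_iff (hX i)).1 (h i)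
  refine (meanVarLe_map_iff (by fun_prop)).2 ⟨?_, memLp_finsetSum _ fun i _ => hL2 i, ?_, ?_⟩
  · filter_upwards [ae_all_iff.2 hnonneg] with ω hω
    exact Finset.sum_nonneg fun i _ => hω i
  · rw [integral_finsetSum _ fun i _ => (hL2 i).integrable one_le_two]
    exact Finset.sum_congr rfl fun i _ => hmean i
  · rw [Real.sq_sqrt (by positivity)]
    exact (variance_fun_sum_le_of_covariance_nonpos hL2 hcov).trans
      (Finset.sum_le_sum fun i _ => hvar i)

theorem covariance_eval_pi_eq_zero [Fintype ι] {Fs : ι → Measure ℝ}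
    [∀ i, IsProbabilityMeasure (Fs i)] (hFs : ∀ i, MemLp id 2 (Fs i)) {i j : ι} (hij : i ≠ j) :
    cov[fun v => v i, fun v => v j; Measure.pi Fs] = 0 := by
  have hL2 (k : ι) : MemLp (fun v : ι → ℝ => v k) 2 (Measure.pi Fs) :=
    (hFs k).comp_measurePreserving (measurePreserving_eval Fs k)
  have hindep := (iIndepFun_pi (μ := Fs) (X := fun _ => id) fun _ => aemeasurable_id).indepFun hij
  exact hindep.covariance_eq_zero (hL2 i) (hL2 j)

theorem sqrt_sum_sq_div_sum_le [Fintype ι] [Nonempty ι] {μs σs : ι → ℝ} {r : ℝ}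
    (hμ : ∀ j, 0 < μs j) (hσ : ∀ j, 0 ≤ σs j) (hr : ∀ j, σs j / μs j ≤ r) :
    √(∑ j, σs j ^ 2) / ∑ j, μs j ≤ r := by
  have hsum : 0 < ∑ j, μs j := Finset.sum_pos (fun j _ => hμ j) Finset.univ_nonempty
  have hr0 : 0 ≤ r := (div_nonneg (hσ _) (hμ _).le).trans (hr (Classical.arbitrary ι))
  rw [div_le_iff₀ hsum]
  refine Real.sqrt_le_iff.2 ⟨by positivity, ?_⟩
  calc ∑ j, σs j ^ 2
      ≤ ∑ j, (r * μs j) ^ 2 := by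
        gcongr with j
        · exact hσ j
        · exact (div_le_iff₀ (hμ j)).1 (hr j)
    _ ≤ (∑ j, r * μs j) ^ 2 :=
        Finset.sum_sq_le_sq_sum_of_nonneg fun j _ => mul_nonneg hr0 (hμ j).le
    _ = (r * ∑ j, μs j) ^ 2 := by rw [Finset.mul_sum]

end MeanVar

section Mechanisms

theorem TruthfulMech.pay_le_sum {m : ℕ} (M : TruthfulMech m) {v : Fin m → ℝ} (hv : ∀ i, 0 ≤ v i) :
    M.pay v ≤ ∑ i, v i :=
  calc M.pay v ≤ ∑ i, M.alloc v i * v i := sub_nonneg.1 (M.ir v hv)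
    _ ≤ ∑ i, v i :=
        Finset.sum_le_sum fun i _ => mul_le_of_le_one_left (hv i) (M.alloc_le_one v i)

theorem optM_le_integral_sum {m : ℕ} {F : Measure (Fin m → ℝ)} (h0 : ∀ᵐ v ∂F, ∀ i, 0 ≤ v i)
    (hint : Integrable (fun v => ∑ i, v i) F) : optM m F ≤ ∫ v, ∑ i, v i ∂F := by
  refine Real.iSup_le (fun M => ?_) (integral_nonneg_of_ae ?_)
  · refine integral_mono_of_nonneg (.of_forall M.pay_nonneg) hint ?_
    filter_upwards [h0] with v hv using M.pay_le_sum hv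
  · filter_upwards [h0] with v hv using Finset.sum_nonneg fun i _ => hv i

variable {A F : Measure ℝ} [IsFiniteMeasure F]

theorem integrable_prod_indicator_fst_le_snd (hA : Integrable id A) :
    Integrable (fun z : ℝ × ℝ => (Iic z.2).indicator id z.1) (A.prod F) :=
  (hA.comp_fst F).indicator (measurableSet_le measurable_fst measurable_snd)

variable [SFinite A]

theorem integrable_setIntegral_Iic (hA : Integrable id A) :
    Integrable (fun y => ∫ p in Iic y, p ∂A) F := by
  have h := (integrable_prod_indicator_fst_le_snd (F := F) hA).integral_prod_right
  simpa only [integral_indicator measurableSet_Iic, id] using h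

theorem mrev_eq_integral_setIntegral_Iic (hA : Integrable id A) :
    mrev A F = ∫ y, ∫ p in Iic y, p ∂A ∂F := by
  have hrev (p : ℝ) : rev F p = ∫ y, (Iic y).indicator id p ∂F := by
    have hswap : (fun y => (Iic y).indicator id p) = (Ici p).indicator fun _ => p := by
      ext y
      simp [indicator]
    rw [hswap, integral_indicator_const _ measurableSet_Ici, smul_eq_mul, mul_comm]
    rfl
  simp only [mrev, hrev]
  rw [integral_integral_swap (integrable_prod_indicator_fst_le_snd hA)]
  simp only [integral_indicator measurableSet_Iic, id]

end Mechanisms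

section LogLottery

/-- The denominator of the cdf of the log-lottery on `[p1, p2]`; it is `0` if `p1 = p2`. -/
noncomputable def logLotteryNorm (p1 p2 : ℝ) : ℝ :=
  p2 * Real.log (p2 / p1) - (p2 - p1)

/-- The density of the log-lottery, meaningful for arguments in `(p1, p2]` only. -/
noncomputable def logLotteryDensity (p1 p2 x : ℝ) : ℝ :=
  (p2 / x - 1) / logLotteryNorm p1 p2

/-- The quadratic in the buyer's value `y` that bounds the revenue of the log-lottery from below;
for `y ∈ [p1, p2]` the two agree. -/
noncomputable def logLotteryMinorant (p1 p2 y : ℝ) : ℝ :=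
  (p2 * (y - p1) - (y ^ 2 - p1 ^ 2) / 2) / logLotteryNorm p1 p2

variable {A F : Measure ℝ} {p1 p2 a s : ℝ}

theorem logLotteryNorm_pos (hp1 : 0 < p1) (hlt : p1 < p2) : 0 < logLotteryNorm p1 p2 := by
  have hp2 : 0 < p2 := hp1.trans hlt
  have hlog : Real.log (p1 / p2) < p1 / p2 - 1 :=
    Real.log_lt_sub_one_of_pos (div_pos hp1 hp2) ((div_lt_one hp2).2 hlt).ne
  have hscaled : p2 * Real.log (p1 / p2) < p2 * (p1 / p2 - 1) := by gcongr
  rw [← inv_div, Real.log_inv, inv_div, mul_sub, mul_div_cancel₀ _ hp2.ne'] at hscaled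
  rw [logLotteryNorm]
  linarith

theorem logLotteryDensity_nonneg (hp1 : 0 < p1) (hlt : p1 < p2) {x : ℝ} (hx : x ∈ Ioc p1 p2) :
    0 ≤ logLotteryDensity p1 p2 x :=
  div_nonneg (sub_nonneg.2 ((one_le_div (hp1.trans hx.1)).2 hx.2)) (logLotteryNorm_pos hp1 hlt).le

theorem intervalIntegrable_logLotteryDensity {b : ℝ} (hp1 : 0 < p1) (hb : 0 < b) :
    IntervalIntegrable (logLotteryDensity p1 p2) volume p1 b := by
  have hne : ∀ x ∈ uIcc p1 b, x ≠ 0 := fun x hx => ((lt_min hp1 hb).trans_le hx.1).ne'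
  exact (((continuousOn_const.div continuousOn_id hne).sub continuousOn_const).div_const
    _).intervalIntegrable

theorem integral_logLotteryDensity {b : ℝ} (hp1 : 0 < p1) (hb : 0 < b) :
    ∫ x in p1..b, logLotteryDensity p1 p2 x =
      (p2 * Real.log (b / p1) - (b - p1)) / logLotteryNorm p1 p2 := by
  have hne : (0 : ℝ) ∉ uIcc p1 b := fun h => (lt_min hp1 hb).not_ge h.1
  have hinv : IntervalIntegrable (fun x => p2 * x⁻¹) volume p1 b :=
    (intervalIntegral.intervalIntegrable_inv (fun x hx => ne_of_mem_of_not_mem hx hne)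
      continuousOn_id).const_mul p2
  simp only [logLotteryDensity, div_eq_mul_inv p2]
  rw [intervalIntegral.integral_div, intervalIntegral.integral_sub hinv (by simp),
    intervalIntegral.integral_const_mul, integral_inv hne, integral_one]

theorem lintegral_logLotteryDensity {b : ℝ} (hp1 : 0 < p1) (hlt : p1 < p2) (hb : b ∈ Icc p1 p2) :
    ∫⁻ x in Ioc p1 b, ENNReal.ofReal (logLotteryDensity p1 p2 x) =
      ENNReal.ofReal ((p2 * Real.log (b / p1) - (b - p1)) / logLotteryNorm p1 p2) := by
  have hb0 : 0 < b := hp1.trans_le hb.1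
  rw [← integral_logLotteryDensity hp1 hb0, intervalIntegral.integral_of_le hb.1,
    ofReal_integral_eq_lintegral_ofReal]
  · exact (intervalIntegrable_iff_integrableOn_Ioc_of_le hb.1).1
      (intervalIntegrable_logLotteryDensity hp1 hb0)
  · filter_upwards [ae_restrict_mem measurableSet_Ioc] with x hx
    exact logLotteryDensity_nonneg hp1 hlt ⟨hx.1, hx.2.trans hb.2⟩

namespace IsLogLottery

theorem ae_mem_Icc (hA : IsLogLottery A p1 p2) : ∀ᵐ p ∂A, p ∈ Icc p1 p2 := by
  have := hA.prob
  exact (mem_ae_iff_prob_eq_one measurableSet_Icc).2 hA.supp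

theorem integrable_id (hA : IsLogLottery A p1 p2) : Integrable id A := by
  have := hA.prob
  exact .of_mem_Icc p1 p2 aemeasurable_id hA.ae_mem_Icc

theorem eq_withDensity (hA : IsLogLottery A p1 p2) (hp1 : 0 < p1) (hlt : p1 < p2) :
    A = (volume.restrict (Ioc p1 p2)).withDensity fun x =>
      ENNReal.ofReal (logLotteryDensity p1 p2 x) := by
  have := hA.prob
  refine Measure.ext_of_Iic _ _ fun x => ?_
  rw [withDensity_apply _ measurableSet_Iic, Measure.restrict_restrict measurableSet_Iic,
    inter_comm, Ioc_inter_Iic]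
  rcases lt_or_ge x p1 with hx | hx
  · have hnull : A (Iic x) = 0 := by
      refine measure_eq_zero_iff_ae_notMem.2 ?_
      filter_upwards [hA.ae_mem_Icc] with p hp using (hx.trans_le hp.1).not_ge
    rw [hnull, Ioc_eq_empty ((min_le_right _ _).trans hx.le).not_gt, Measure.restrict_empty,
      lintegral_zero_measure]
  rcases lt_or_ge x p2 with hx2 | hx2
  · rw [min_eq_right hx2.le, lintegral_logLotteryDensity hp1 hlt ⟨hx, hx2.le⟩, hA.cdf x ⟨hx, hx2⟩,
      logLotteryNorm]
  · have hfull : A (Iic x) = 1 := by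
      refine (mem_ae_iff_prob_eq_one measurableSet_Iic).1 ?_
      filter_upwards [hA.ae_mem_Icc] with p hp using hp.2.trans hx2
    rw [hfull, min_eq_left hx2, lintegral_logLotteryDensity hp1 hlt ⟨hlt.le, le_rfl⟩,
      ← logLotteryNorm, div_self (logLotteryNorm_pos hp1 hlt).ne', ENNReal.ofReal_one]

theorem setIntegral_Iic (hA : IsLogLottery A p1 p2) (hp1 : 0 < p1) (hlt : p1 < p2) (y : ℝ) :
    ∫ p in Iic y, p ∂A = ∫ p in Ioc p1 (min p2 y), (p2 - p) / logLotteryNorm p1 p2 := by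
  have hmeas : Measurable fun x => ENNReal.ofReal (logLotteryDensity p1 p2 x) := by
    unfold logLotteryDensity
    fun_prop
  rw [hA.eq_withDensity hp1 hlt, restrict_withDensity measurableSet_Iic,
    Measure.restrict_restrict measurableSet_Iic, inter_comm, Ioc_inter_Iic,
    integral_withDensity_eq_integral_toReal_smul hmeas (by simp)]
  refine setIntegral_congr_fun measurableSet_Ioc fun p hp => ?_
  have hp0 : 0 < p := hp1.trans hp.1
  have hnonneg := logLotteryDensity_nonneg hp1 hlt ⟨hp.1, hp.2.trans (min_le_left _ _)⟩
  simp only [smul_eq_mul]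
  rw [ENNReal.toReal_ofReal hnonneg, logLotteryDensity]
  field_simp

theorem minorant_le_setIntegral_Iic (hA : IsLogLottery A p1 p2) (hp1 : 0 < p1) (hlt : p1 < p2)
    (y : ℝ) : logLotteryMinorant p1 p2 y ≤ ∫ p in Iic y, p ∂A := by
  have hnorm := (logLotteryNorm_pos hp1 hlt).le
  rw [hA.setIntegral_Iic hp1 hlt]
  rcases lt_or_ge y p1 with hy | hy
  · rw [Ioc_eq_empty ((min_le_right _ _).trans hy.le).not_gt, setIntegral_empty]
    exact div_nonpos_of_nonpos_of_nonneg (by nlinarith) hnorm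
  · have hprimitive : ∫ p in p1..min p2 y, (p2 - p) / logLotteryNorm p1 p2 =
        logLotteryMinorant p1 p2 (min p2 y) := by
      rw [intervalIntegral.integral_div, intervalIntegral.integral_sub (by simp) (by simp)]
      simp [logLotteryMinorant, mul_comm]
    rw [← intervalIntegral.integral_of_le (le_min hlt.le hy), hprimitive]
    refine div_le_div_of_nonneg_right ?_ hnorm
    rcases le_total p2 y with h | h
    · rw [min_eq_left h]
      nlinarith [sq_nonneg (y - p2)]
    · rw [min_eq_right h]

theorem mrev_eq_rev_of_self {p : ℝ} (hA : IsLogLottery A p p) : mrev A F = rev F p := by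
  have := hA.prob
  have hconst : rev F =ᵐ[A] fun _ => rev F p := by
    filter_upwards [hA.ae_mem_Icc] with q hq
    rw [le_antisymm hq.2 hq.1]
  rw [mrev, integral_congr_ae hconst, integral_const, probReal_univ, one_smul]

end IsLogLottery

/-- The pair `(p1, p2)` solves the equations that determine the support `[π₁, π₂]` of the
log-lottery for mean `a` and standard deviation `s`. -/
structure LogLotteryParams (p1 p2 a s : ℝ) : Prop where
  pos : 0 < p1
  le : p1 ≤ p2
  mean_eq : p1 * (1 + Real.log (p2 / p1)) = a
  sq_eq : p1 * (2 * p2 - p1) = a ^ 2 + s ^ 2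

theorem MeanVarLe.rev_mean_of_zero (hF : MeanVarLe F a 0) : rev F a = a := by
  have := hF.prob
  have hIci : F (Ici a) = 1 := by
    refine (mem_ae_iff_prob_eq_one measurableSet_Ici).1 ?_
    filter_upwards [hF.ae_eq_mean] with x hx using hx.ge
  rw [rev, hIci, ENNReal.toReal_one, mul_one]

theorem MeanVarLe.integrable_logLotteryMinorant (hF : MeanVarLe F a s) :
    Integrable (logLotteryMinorant p1 p2) F := by
  have := hF.prob
  exact (((hF.int_mean.sub (integrable_const p1)).const_mul p2).sub
    ((hF.int_sq.sub (integrable_const (p1 ^ 2))).div_const 2)).div_const _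

theorem MeanVarLe.integral_logLotteryMinorant (hF : MeanVarLe F a s) :
    ∫ y, logLotteryMinorant p1 p2 y ∂F =
      (p2 * (a - p1) - (∫ y, y ^ 2 ∂F - p1 ^ 2) / 2) / logLotteryNorm p1 p2 := by
  have := hF.prob
  have hlin : Integrable (fun y => y - p1) F := hF.int_mean.sub (integrable_const p1)
  have hquad : Integrable (fun y => y ^ 2 - p1 ^ 2) F := hF.int_sq.sub (integrable_const _)
  simp only [logLotteryMinorant]
  rw [integral_div, integral_sub (hlin.const_mul p2) (hquad.div_const 2), integral_const_mul,
    integral_div, integral_sub hF.int_mean (integrable_const _),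
    integral_sub hF.int_sq (integrable_const _), hF.mean]
  simp only [integral_const, probReal_univ, one_smul]

/-- The left-hand side of the equation `(2e^{ρ-1} - 1) / ρ² = r² + 1` defining `ρ(r)`. -/
noncomputable def sqAddOneOfRatio (ρ : ℝ) : ℝ :=
  (2 * Real.exp (ρ - 1) - 1) / ρ ^ 2

theorem hasDerivAt_sqAddOneOfRatio {x : ℝ} (hx : x ≠ 0) :
    HasDerivAt sqAddOneOfRatio (2 * ((x - 2) * Real.exp (x - 1) + 1) / x ^ 3) x := by
  have hnum : HasDerivAt (fun x => 2 * Real.exp (x - 1) - 1) (2 * Real.exp (x - 1)) x := by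
    simpa using ((((hasDerivAt_id x).sub_const 1).exp).const_mul 2).sub_const 1
  have hden : HasDerivAt (fun x : ℝ => x ^ 2) (2 * x) x := by
    simpa using hasDerivAt_pow 2 x
  refine (hnum.div hden (by positivity)).congr_deriv ?_
  field_simp
  ring

theorem strictMonoOn_sqAddOneOfRatio : StrictMonoOn sqAddOneOfRatio (Ici 1) := by
  have hderiv {x : ℝ} (hx : 1 ≤ x) := hasDerivAt_sqAddOneOfRatio (zero_lt_one.trans_le hx).ne'
  refine strictMonoOn_of_deriv_pos (convex_Ici 1)
    (fun x hx => (hderiv hx).continuousAt.continuousWithinAt) fun x hx => ?_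
  rw [interior_Ici, mem_Ioi] at hx
  rw [(hderiv hx.le).deriv]
  have htangent : 2 - x < Real.exp (1 - x) := by
    linarith [Real.add_one_lt_exp (x := 1 - x) (by linarith)]
  have hscaled : (2 - x) * Real.exp (x - 1) < 1 := by
    calc (2 - x) * Real.exp (x - 1)
        < Real.exp (1 - x) * Real.exp (x - 1) := by gcongr
      _ = 1 := by rw [← Real.exp_add]; simp
  have hnum : 0 < (x - 2) * Real.exp (x - 1) + 1 := by linarith
  exact div_pos (mul_pos two_pos hnum) (pow_pos (zero_lt_one.trans hx) 3)

namespace LogLotteryParams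

theorem one_le_one_add_log (hp : LogLotteryParams p1 p2 a s) : 1 ≤ 1 + Real.log (p2 / p1) :=
  le_add_of_nonneg_right (Real.log_nonneg ((one_le_div hp.pos).2 hp.le))

theorem mean_pos (hp : LogLotteryParams p1 p2 a s) : 0 < a := by
  rw [← hp.mean_eq]
  exact mul_pos hp.pos (zero_lt_one.trans_le hp.one_le_one_add_log)

theorem le_integral_logLotteryMinorant (hp : LogLotteryParams p1 p2 a s) (hlt : p1 < p2)
    (hF : MeanVarLe F a s) : p1 ≤ ∫ y, logLotteryMinorant p1 p2 y ∂F := by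
  have hmoment : ∫ y, y ^ 2 ∂F ≤ p1 * (2 * p2 - p1) := hp.sq_eq ▸ hF.integral_sq_le
  rw [hF.integral_logLotteryMinorant, le_div_iff₀ (logLotteryNorm_pos hp.pos hlt)]
  calc p1 * logLotteryNorm p1 p2
      = p2 * (a - p1) - (p1 * (2 * p2 - p1) - p1 ^ 2) / 2 := by
        rw [← hp.mean_eq, logLotteryNorm]
        ring
    _ ≤ p2 * (a - p1) - (∫ y, y ^ 2 ∂F - p1 ^ 2) / 2 := by gcongr

theorem eq_mean_and_eq_zero_of_eq (hp : LogLotteryParams p1 p2 a s) (h : p1 = p2) :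
    p1 = a ∧ s = 0 := by
  subst h
  have ha : p1 = a := by simpa [hp.pos.ne'] using hp.mean_eq
  refine ⟨ha, pow_eq_zero_iff two_ne_zero |>.1 ?_⟩
  linear_combination (p1 + a) * ha - hp.sq_eq

theorem le_mrev (hp : LogLotteryParams p1 p2 a s) (hA : IsLogLottery A p1 p2)
    (hF : MeanVarLe F a s) : p1 ≤ mrev A F := by
  have := hA.prob
  have := hF.prob
  rcases hp.le.eq_or_lt with heq | hlt
  · obtain ⟨rfl, rfl⟩ := hp.eq_mean_and_eq_zero_of_eq heq
    subst heq
    rw [hA.mrev_eq_rev_of_self, hF.rev_mean_of_zero]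
  · calc p1 ≤ ∫ y, logLotteryMinorant p1 p2 y ∂F := hp.le_integral_logLotteryMinorant hlt hF
      _ ≤ ∫ y, ∫ p in Iic y, p ∂A ∂F :=
          integral_mono hF.integrable_logLotteryMinorant
            (integrable_setIntegral_Iic hA.integrable_id)
            (hA.minorant_le_setIntegral_Iic hp.pos hlt)
      _ = mrev A F := (mrev_eq_integral_setIntegral_Iic hA.integrable_id).symm

theorem sqAddOneOfRatio_one_add_log (hp : LogLotteryParams p1 p2 a s) :
    sqAddOneOfRatio (1 + Real.log (p2 / p1)) = (s / a) ^ 2 + 1 := by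
  have hp1 := hp.pos
  have hL : 1 + Real.log (p2 / p1) ≠ 0 := (zero_lt_one.trans_le hp.one_le_one_add_log).ne'
  have ha := hp.mean_pos.ne'
  calc sqAddOneOfRatio (1 + Real.log (p2 / p1))
      = (2 * (p2 / p1) - 1) / (1 + Real.log (p2 / p1)) ^ 2 := by
        rw [sqAddOneOfRatio, add_sub_cancel_left, Real.exp_log (div_pos (hp1.trans_le hp.le) hp1)]
    _ = p1 * (2 * p2 - p1) / a ^ 2 := by
        rw [← hp.mean_eq]
        field_simp
    _ = (s / a) ^ 2 + 1 := by
        rw [hp.sq_eq]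
        field_simp
        ring

theorem mul_eq_mean_of_sqAddOneOfRatio_eq (hp : LogLotteryParams p1 p2 a s) {ρ : ℝ} (hρ : 1 ≤ ρ)
    (h : sqAddOneOfRatio ρ = (s / a) ^ 2 + 1) : p1 * ρ = a := by
  have hρ_eq : ρ = 1 + Real.log (p2 / p1) :=
    strictMonoOn_sqAddOneOfRatio.injOn hρ hp.one_le_one_add_log
      (h.trans hp.sqAddOneOfRatio_one_add_log.symm)
  rw [hρ_eq, hp.mean_eq]

end LogLotteryParams

end LogLottery

theorem stmt15_general (m : ℕ) (μs σs : Fin m → ℝ)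
    (hμs : ∀ j, 0 < μs j) (hσs : ∀ j, 0 ≤ σs j)
    (F : Measure (Fin m → ℝ)) [IsProbabilityMeasure F]
    (hmarg : ∀ j, MeanVarLe (F.map fun v => v j) (μs j) (σs j))
    (hcov : Pairwise fun i j => cov[fun v => v i, fun v => v j; F] ≤ 0)
    (μbar σbar rbar rmax : ℝ)
    (hμbar : μbar = ∑ j, μs j) (hσbar : σbar = √(∑ j, (σs j) ^ 2))
    (hrbar : rbar = σbar / μbar)
    (hrmax : IsGreatest (range fun j => σs j / μs j) rmax)
    (ρ1 : ℝ) (hρ11 : 1 ≤ ρ1) (hρ12 : (2 * Real.exp (ρ1 - 1) - 1) / ρ1 ^ 2 = rbar ^ 2 + 1)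
    (ρ2 : ℝ) (hρ21 : 1 ≤ ρ2) (hρ22 : (2 * Real.exp (ρ2 - 1) - 1) / ρ2 ^ 2 = rmax ^ 2 + 1)
    (A : Measure ℝ)
    (hA : ∃ p1 p2 : ℝ, 0 < p1 ∧ p1 ≤ p2 ∧
      p1 * (1 + Real.log (p2 / p1)) = μbar ∧
      p1 * (2 * p2 - p1) = μbar ^ 2 + σbar ^ 2 ∧
      IsLogLottery A p1 p2) :
    optM m F / ρ1 ≤ mrev A (F.map fun v => ∑ j, v j) ∧ ρ1 ≤ ρ2 := by
  obtain ⟨p1, p2, hp1, hle, hmean, hsq, hlot⟩ := hA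
  have hp : LogLotteryParams p1 p2 μbar σbar := ⟨hp1, hle, hmean, hsq⟩
  have hY : MeanVarLe (F.map fun v => ∑ j, v j) μbar σbar :=
    hμbar ▸ hσbar ▸ MeanVarLe.map_sum (fun j => (measurable_pi_apply j).aemeasurable) hmarg hcov
  have hv0 : ∀ᵐ v ∂F, ∀ j, 0 ≤ v j :=
    ae_all_iff.2 fun j => ((meanVarLe_map_iff (measurable_pi_apply j).aemeasurable).1 (hmarg j)).1
  obtain ⟨-, hL2, hEY, -⟩ := (meanVarLe_map_iff (by fun_prop)).1 hY
  have hopt : optM m F ≤ μbar := hEY ▸ optM_le_integral_sum hv0 (hL2.integrable one_le_two)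
  have hρ : p1 * ρ1 = μbar := hp.mul_eq_mean_of_sqAddOneOfRatio_eq hρ11 (hrbar ▸ hρ12)
  refine ⟨?_, ?_⟩
  · have hp1_ge : optM m F / ρ1 ≤ p1 := (div_le_iff₀ (zero_lt_one.trans_le hρ11)).2 (hρ ▸ hopt)
    exact hp1_ge.trans (hp.le_mrev hlot hY)
  · have : Nonempty (Fin m) := range_nonempty_iff_nonempty.1 hrmax.nonempty
    have hr0 : 0 ≤ rbar := hrbar ▸ div_nonneg (hσbar ▸ Real.sqrt_nonneg _) hp.mean_pos.le
    have hr : rbar ≤ rmax := by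
      rw [hrbar, hσbar, hμbar]
      exact sqrt_sum_sq_div_sum_le hμs hσs fun j => hrmax.2 ⟨j, rfl⟩
    refine (strictMonoOn_sqAddOneOfRatio.le_iff_le hρ11 hρ21).1 ?_
    calc sqAddOneOfRatio ρ1 = rbar ^ 2 + 1 := hρ12
      _ ≤ rmax ^ 2 + 1 := by gcongr
      _ = sqAddOneOfRatio ρ2 := hρ22.symm

/-- Let `F = F_1 × ⋯ × F_m` be a product distribution on `[0,∞)^m` with
`F_j` of mean `μ_j > 0` and variance at most `σ_j²`. With `μ̄ = Σ_j μ_j`,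
`σ̄ = (Σ_j σ_j²)^{1/2}`, `r̄ = σ̄/μ̄` and `r_max = max_j σ_j/μ_j`, selling the full bundle
via the log-lottery `P^log_{μ̄,σ̄}` guarantees
`REV(P^log_{μ̄,σ̄};F_Y) ≥ OPT_m(F)/ρ(r̄)`, where `F_Y` is the distribution of the sum of
the independent item values; moreover `ρ(r̄) ≤ ρ(r_max)`. -/
theorem stmt15 (m : ℕ) (hm : 0 < m) (μs σs : Fin m → ℝ)
    (hμs : ∀ j, 0 < μs j) (hσs : ∀ j, 0 ≤ σs j)
    (Fs : Fin m → Measure ℝ) (hmarg : ∀ j, MeanVarLe (Fs j) (μs j) (σs j))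
    (μbar σbar rbar rmax : ℝ)
    (hμbar : μbar = ∑ j, μs j) (hσbar : σbar = Real.sqrt (∑ j, (σs j) ^ 2))
    (hrbar : rbar = σbar / μbar)
    (hrmax : IsGreatest (Set.range fun j => σs j / μs j) rmax)
    (ρ1 : ℝ) (hρ11 : 1 ≤ ρ1) (hρ12 : (2 * Real.exp (ρ1 - 1) - 1) / ρ1 ^ 2 = rbar ^ 2 + 1)
    (ρ2 : ℝ) (hρ21 : 1 ≤ ρ2) (hρ22 : (2 * Real.exp (ρ2 - 1) - 1) / ρ2 ^ 2 = rmax ^ 2 + 1)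
    (A : Measure ℝ)
    (hA : ∃ p1 p2 : ℝ, 0 < p1 ∧ p1 ≤ p2 ∧
      p1 * (1 + Real.log (p2 / p1)) = μbar ∧
      p1 * (2 * p2 - p1) = μbar ^ 2 + σbar ^ 2 ∧
      IsLogLottery A p1 p2) :
    optM m (Measure.pi Fs) / ρ1 ≤
      mrev A ((Measure.pi Fs).map (fun v => ∑ j, v j)) ∧
    ρ1 ≤ ρ2 := by
  have (j : Fin m) : IsProbabilityMeasure (Fs j) := (hmarg j).prob
  exact stmt15_general m μs σs hμs hσs (Measure.pi Fs)
    (fun j => (measurePreserving_eval Fs j).map_eq.symm ▸ hmarg j)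
    (fun i j hij => (covariance_eval_pi_eq_zero (fun k => (meanVarLe_iff.1 (hmarg k)).2.1) hij).le)
    μbar σbar rbar rmax hμbar hσbar hrbar hrmax ρ1 hρ11 hρ12 ρ2 hρ21 hρ22 A hA
end
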